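/- Let R be a Hecke symmetry with parameter q, and let M and D be N×N matrices with entries in a unital associative ℂ-algebra 𝒜 satisfying the permutation relations D₁ R M₁ = R M₁ R⁻¹ D₁ R⁻¹ + I. Then, as an identity of N³×N³ matrices over 𝒜, D₁ (R₂ M_{2̄} M_{3̄} − M_{2̄} M_{3̄} R₂) = (R₂ M_{2̄} M_{3̄} − M_{2̄} M_{3̄} R₂) D₁ R₁⁻¹ R₂⁻² R₁⁻¹. -/

import Mathlib

open Matrix BigOperators

noncomputable section

/-- An `N² × N²` complex matrix, viewed as an operator on `ℂ^N ⊗ ℂ^N`. -/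
abbrev RMat (N : ℕ) := Matrix (Fin N × Fin N) (Fin N × Fin N) ℂ

/-- A matrix on the `k`-th tensor power of `ℂ^N`, with entries in `A`. -/
abbrev TMat (N k : ℕ) (A : Type _) := Matrix (Fin k → Fin N) (Fin k → Fin N) A

/-- The `q`-number `j_q = (q^j - q^{-j})/(q - q^{-1})`. -/
def qNum (q : ℂ) (j : ℕ) : ℂ := (q ^ j - q⁻¹ ^ j) / (q - q⁻¹)

/-- Embedding of an `N²×N²` matrix `R` into the `k`-th tensor power,
acting in the (0-based) tensor factors `i` and `i+1`.  The paper's `R_i`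
(1-based) is `embR k R (i-1)`. -/
def embR {N : ℕ} (k : ℕ) (R : RMat N) (i : ℕ) : TMat N k ℂ := fun f g =>
  if h : i + 1 < k then
    if ∀ j : Fin k, j.val ≠ i → j.val ≠ i + 1 → f j = g j then
      R (f ⟨i, Nat.lt_of_succ_lt h⟩, f ⟨i + 1, h⟩) (g ⟨i, Nat.lt_of_succ_lt h⟩, g ⟨i + 1, h⟩)
    else 0
  else (1 : TMat N k ℂ) f g

/-- `X ⊗ I^{⊗(k-1)}` : the first copy `X_{1̄}` of an `N×N` matrix over `A`. -/
def emb1 {N : ℕ} (k : ℕ) {A : Type _} [Ring A] (X : Matrix (Fin N) (Fin N) A) :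
    TMat N k A := fun f g =>
  if h : 0 < k then
    if ∀ j : Fin k, j.val ≠ 0 → f j = g j then X (f ⟨0, h⟩) (g ⟨0, h⟩) else 0
  else (1 : TMat N k A) f g

/-- Lift a complex matrix to a matrix over the `ℂ`-algebra `A`. -/
def liftC {N k : ℕ} (A : Type _) [Ring A] [Algebra ℂ A] (X : TMat N k ℂ) : TMat N k A :=
  X.map (algebraMap ℂ A)

/-- The copies `X_{1̄}, X_{2̄}, …` of `X` in the `k`-th tensor power:
`copyX k R Rinv X i` is the paper's `X_{\overline{i+1}}`, i.e.
`X_{1̄} = X ⊗ I^{⊗(k-1)}` and `X_{\overline{i+1}} = R_i X_{ī} R_i⁻¹`. -/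
def copyX {N : ℕ} (k : ℕ) (R Rinv : RMat N) {A : Type _} [Ring A] [Algebra ℂ A]
    (X : Matrix (Fin N) (Fin N) A) : ℕ → TMat N k A
  | 0 => emb1 k X
  | i + 1 => liftC A (embR k R i) * copyX k R Rinv X i * liftC A (embR k Rinv i)

/-- The `R`-skew-symmetrizers, on the ambient `k`-th tensor power:
`Asym k R q j` is `A^{(j)}` (acting in the first `j` factors). -/
def Asym {N : ℕ} (k : ℕ) (R : RMat N) (q : ℂ) : ℕ → TMat N k ℂ
  | 0 => 1
  | 1 => 1
  | j + 2 =>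
      (qNum q (j + 2))⁻¹ •
        (Asym k R q (j + 1) *
          ((q ^ (j + 1)) • (1 : TMat N k ℂ) - (qNum q (j + 1)) • embR k R j) *
          Asym k R q (j + 1))

/-- The `R`-symmetrizers, on the ambient `k`-th tensor power:
`Ssym k R q j` is `S^{(j)}` (acting in the first `j` factors). -/
def Ssym {N : ℕ} (k : ℕ) (R : RMat N) (q : ℂ) : ℕ → TMat N k ℂ
  | 0 => 1
  | 1 => 1
  | j + 2 =>
      (qNum q (j + 2))⁻¹ •
        (Ssym k R q (j + 1) *
          ((q⁻¹ ^ (j + 1)) • (1 : TMat N k ℂ) + (qNum q (j + 1)) • embR k R j) *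
          Ssym k R q (j + 1))

/-- The braid relation `R₁₂ R₂₃ R₁₂ = R₂₃ R₁₂ R₂₃` on `(ℂ^N)^{⊗3}`. -/
def IsBraiding {N : ℕ} (R : RMat N) : Prop :=
  embR 3 R 0 * embR 3 R 1 * embR 3 R 0 = embR 3 R 1 * embR 3 R 0 * embR 3 R 1

/-- The Hecke condition `(q·I − R)(q⁻¹·I + R) = 0`. -/
def HeckeCond {N : ℕ} (R : RMat N) (q : ℂ) : Prop :=
  (q • (1 : RMat N) - R) * (q⁻¹ • (1 : RMat N) + R) = 0

/-- The Reflection Equation `R M₁ R M₁ = M₁ R M₁ R` (on `(ℂ^N)^{⊗2}`,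
with entries in `A`). -/
def RERel {N : ℕ} (R : RMat N) {A : Type _} [Ring A] [Algebra ℂ A]
    (M : Matrix (Fin N) (Fin N) A) : Prop :=
  liftC A (embR 2 R 0) * emb1 2 M * liftC A (embR 2 R 0) * emb1 2 M
    = emb1 2 M * liftC A (embR 2 R 0) * emb1 2 M * liftC A (embR 2 R 0)

/-- The relation `R⁻¹ D₁ R⁻¹ D₁ = D₁ R⁻¹ D₁ R⁻¹` on the matrix `D`,
where `Rinv = R⁻¹`. -/
def DDRel {N : ℕ} (Rinv : RMat N) {A : Type _} [Ring A] [Algebra ℂ A]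
    (D : Matrix (Fin N) (Fin N) A) : Prop :=
  liftC A (embR 2 Rinv 0) * emb1 2 D * liftC A (embR 2 Rinv 0) * emb1 2 D
    = emb1 2 D * liftC A (embR 2 Rinv 0) * emb1 2 D * liftC A (embR 2 Rinv 0)

/-- The permutation relations `D₁ R M₁ = R M₁ R⁻¹ D₁ R⁻¹ + I`, where `Rinv = R⁻¹`. -/
def PermRel {N : ℕ} (R Rinv : RMat N) {A : Type _} [Ring A] [Algebra ℂ A]
    (M D : Matrix (Fin N) (Fin N) A) : Prop :=
  emb1 2 D * liftC A (embR 2 R 0) * emb1 2 M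
    = liftC A (embR 2 R 0) * emb1 2 M * liftC A (embR 2 Rinv 0) * emb1 2 D *
        liftC A (embR 2 Rinv 0) + 1

/-- `Ψ` is the skew-inverse of `R`:  `Σ_{j,b} R^{ij}_{ab} Ψ^{bc}_{jd} = δ^i_d δ^c_a`. -/
def SkewInv {N : ℕ} (R Ψ : RMat N) : Prop :=
  ∀ i a c d : Fin N,
    (∑ j : Fin N, ∑ b : Fin N, R (i, j) (a, b) * Ψ (b, c) (j, d))
      = if i = d ∧ c = a then 1 else 0

/-- The matrix `C`, `C^c_d = Σ_i Ψ^{ic}_{id}`. -/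
def Cmat {N : ℕ} (Ψ : RMat N) : Matrix (Fin N) (Fin N) ℂ :=
  fun c d => ∑ i : Fin N, Ψ (i, c) (i, d)

/-- The `R`-trace over all `k` tensor factors: `⟨X⟩_{1…k} = Tr(C^{⊗k} X)`. -/
def rTr {N k : ℕ} {A : Type _} [Ring A] [Algebra ℂ A] (C : Matrix (Fin N) (Fin N) ℂ)
    (X : TMat N k A) : A :=
  ∑ f : Fin k → Fin N, ∑ g : Fin k → Fin N, (∏ j : Fin k, C (f j) (g j)) • X g f

/-- The chain `X_{1̄} X_{2̄} ⋯ X_{n̄}`. -/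
def upChain {N : ℕ} (k : ℕ) (R Rinv : RMat N) {A : Type _} [Ring A] [Algebra ℂ A]
    (X : Matrix (Fin N) (Fin N) A) (n : ℕ) : TMat N k A :=
  ((List.range n).map (copyX k R Rinv X)).prod

/-- The reversed chain `X_{n̄} X_{\overline{n-1}} ⋯ X_{1̄}`. -/
def downChain {N : ℕ} (k : ℕ) (R Rinv : RMat N) {A : Type _} [Ring A] [Algebra ℂ A]
    (X : Matrix (Fin N) (Fin N) A) (n : ℕ) : TMat N k A :=
  ((List.range n).reverse.map (copyX k R Rinv X)).prod

/-- The Capelli chain `L_{1̄}(L_{2̄} + q·1_q I)(L_{3̄} + q²·2_q I) ⋯ (L_{n̄} + q^{n-1}·(n-1)_q I)`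
(note `0_q = 0`). -/
def capChainA {N : ℕ} (k : ℕ) (R Rinv : RMat N) (q : ℂ) {A : Type _} [Ring A] [Algebra ℂ A]
    (L : Matrix (Fin N) (Fin N) A) (n : ℕ) : TMat N k A :=
  ((List.range n).map
    (fun i => copyX k R Rinv L i + ((q ^ i) * qNum q i) • (1 : TMat N k A))).prod

/-- The symmetric Capelli chain
`L_{1̄}(L_{2̄} - q⁻¹·1_q I) ⋯ (L_{n̄} - q^{-(n-1)}·(n-1)_q I)`. -/
def capChainS {N : ℕ} (k : ℕ) (R Rinv : RMat N) (q : ℂ) {A : Type _} [Ring A] [Algebra ℂ A]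
    (L : Matrix (Fin N) (Fin N) A) (n : ℕ) : TMat N k A :=
  ((List.range n).map
    (fun i => copyX k R Rinv L i - ((q⁻¹ ^ i) * qNum q i) • (1 : TMat N k A))).prod

/-- The descending chain `R_{a→b} = R_a R_{a-1} ⋯ R_b` (1-based indices;
identity when `b > a`). -/
def rChainDesc {N : ℕ} (k : ℕ) (R : RMat N) (a b : ℕ) : TMat N k ℂ :=
  ((List.range' b (a + 1 - b)).reverse.map (fun j => embR k R (j - 1))).prod

/-- The ascending chain `R_{b→a} = R_b R_{b+1} ⋯ R_a` (1-based indices;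
identity when `b > a`). -/
def rChainAsc {N : ℕ} (k : ℕ) (R : RMat N) (b a : ℕ) : TMat N k ℂ :=
  ((List.range' b (a + 1 - b)).map (fun j => embR k R (j - 1))).prod

/-!
Put `Δ = R₁ R₂ R₁`. Since `M₁` commutes with `R₂`, the braid relation gives
`M_{2̄} M_{3̄} = (R₁ M₁) (R₂ R₁ M₁) Δ⁻¹`, and moving `D₁` through both factors with the permutation
relation yields `D₁ M_{2̄} M_{3̄} = M_{2̄} M_{3̄} D₁ J + E` with `J = R₁⁻¹ R₂⁻² R₁⁻¹` and
`E = (R₁ M₁ R₁⁻¹ + R₂ R₁ M₁) Δ⁻¹`. By the braid relation `J`, the inverse of a Jucys–Murphy element,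
commutes with `R₂`. By the Hecke condition `R₁ - R₁⁻¹ = R₂ - R₂⁻¹`, whence `E` commutes with `R₂` as
well and cancels from the commutator.
-/

section BraidRelation

variable {G : Type*} [Group G] {r s : G}

theorem inv_mul_mul_of_braid (hbr : r * s * r = s * r * s) :
    r⁻¹ * s * r = s * r * s⁻¹ := by
  rw [eq_mul_inv_iff_mul_eq, mul_assoc, mul_assoc, inv_mul_eq_iff_eq_mul, ← mul_assoc, ← hbr,
    mul_assoc]

theorem halfTwist_inv_mul_of_braid (hbr : r * s * r = s * r * s) :
    (r * s * r)⁻¹ * s = r * (r * s * r)⁻¹ := by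
  rw [inv_mul_eq_iff_eq_mul, ← mul_assoc, eq_mul_inv_iff_mul_eq, hbr]
  simp only [mul_assoc, hbr]

theorem commute_jucysMurphy_inv_of_braid (hbr : r * s * r = s * r * s) :
    Commute s (r⁻¹ * (s⁻¹ * s⁻¹) * r⁻¹) := by
  have hJ : Commute s (r * s * s * r) :=
    calc s * (r * s * s * r) = (s * r * s) * (s * r) := by simp only [mul_assoc]
      _ = r * s * (r * s * r) := by rw [← hbr]; simp only [mul_assoc]
      _ = r * s * s * r * s := by rw [hbr]; simp only [mul_assoc]
  simpa only [_root_.mul_inv_rev, mul_assoc] using hJ.inv_right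

end BraidRelation

section PermutationRelation

variable {B : Type*} [Ring B] {r s : Bˣ} {M D : B}

/-- The product `M_{2̄} M_{3̄}` of two consecutive copies of `M`, written in an arbitrary ring: `r`
and `s` stand for `R₁` and `R₂`, and `M` for `M₁`. -/
def copyPair (r s : Bˣ) (M : B) : B :=
  r * M * ↑r⁻¹ * (s * (r * M * ↑r⁻¹) * ↑s⁻¹)

/-- The inhomogeneous term produced by moving `D` through `M_{2̄} M_{3̄}`. -/
def copyPairDefect (r s : Bˣ) (M : B) : B :=
  (r * M * ↑r⁻¹ + s * r * M) * ↑(r * s * r)⁻¹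

theorem copyPair_eq_mul_halfTwist_inv (hbr : r * s * r = s * r * s) (hMs : Commute M s) :
    copyPair r s M = r * M * (s * r * M) * ↑(r * s * r)⁻¹ := by
  have hconj : (↑r⁻¹ * s * r : B) = s * r * ↑s⁻¹ := mod_cast inv_mul_mul_of_braid hbr
  calc copyPair r s M = r * M * (↑r⁻¹ * s * r) * M * ↑r⁻¹ * ↑s⁻¹ := by
        simp only [copyPair, mul_assoc]
    _ = r * M * s * r * (↑s⁻¹ * M) * ↑r⁻¹ * ↑s⁻¹ := by rw [hconj]; simp only [mul_assoc]
    _ = r * M * s * r * (M * ↑s⁻¹) * ↑r⁻¹ * ↑s⁻¹ := by rw [hMs.units_inv_right.eq]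
    _ = r * M * (s * r * M) * ↑(r * s * r)⁻¹ := by
        rw [hbr]; simp only [_root_.mul_inv_rev, Units.val_mul, mul_assoc]

theorem mul_conj_mul_of_permutationRelation (hbr : r * s * r = s * r * s) (hMs : Commute M s)
    (hDs : Commute D s) (hperm : D * r * M = r * M * ↑r⁻¹ * D * ↑r⁻¹ + 1) :
    D * (↑r⁻¹ * s * r * M) = s * r * M * ↑r⁻¹ * D * ↑r⁻¹ * ↑s⁻¹ + 1 := by
  have hconj : (↑r⁻¹ * s * r : B) = s * r * ↑s⁻¹ := mod_cast inv_mul_mul_of_braid hbr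
  calc D * (↑r⁻¹ * s * r * M) = (D * s) * r * (↑s⁻¹ * M) := by
        rw [hconj]; simp only [mul_assoc]
    _ = s * (D * r * M) * ↑s⁻¹ := by
        rw [hDs.eq, ← hMs.units_inv_right.eq]; simp only [mul_assoc]
    _ = s * r * M * ↑r⁻¹ * D * ↑r⁻¹ * ↑s⁻¹ + 1 := by
        rw [hperm]; simp only [mul_add, add_mul, mul_one, Units.mul_inv, mul_assoc]

theorem mul_copyPair (hbr : r * s * r = s * r * s) (hMs : Commute M s) (hDs : Commute D s)
    (hperm : D * r * M = r * M * ↑r⁻¹ * D * ↑r⁻¹ + 1) :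
    D * copyPair r s M =
      copyPair r s M * D * ↑(r⁻¹ * (s⁻¹ * s⁻¹) * r⁻¹) + copyPairDefect r s M := by
  set Δ := r * s * r with hΔ
  set J := r⁻¹ * (s⁻¹ * s⁻¹) * r⁻¹ with hJ
  have hJs : (↑r⁻¹ * ↑s⁻¹ * ↑Δ⁻¹ : B) = ↑s⁻¹ * ↑J := by
    have : r⁻¹ * s⁻¹ * Δ⁻¹ = J * s⁻¹ := by
      rw [hbr]; simp only [hJ, _root_.mul_inv_rev, mul_assoc]
    rw [← (commute_jucysMurphy_inv_of_braid hbr).inv_left.eq] at this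
    exact mod_cast this
  calc D * copyPair r s M = (D * r * M) * (s * r * M) * ↑Δ⁻¹ := by
        rw [copyPair_eq_mul_halfTwist_inv hbr hMs]; simp only [hΔ, mul_assoc]
    _ = r * M * ↑r⁻¹ * (D * (↑r⁻¹ * s * r * M)) * ↑Δ⁻¹ + s * r * M * ↑Δ⁻¹ := by
        rw [hperm]; simp only [add_mul, one_mul, mul_assoc]
    _ = r * M * ↑r⁻¹ * s * r * M * ↑r⁻¹ * D * (↑r⁻¹ * ↑s⁻¹ * ↑Δ⁻¹) + copyPairDefect r s M := by
        rw [mul_conj_mul_of_permutationRelation hbr hMs hDs hperm, copyPairDefect]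
        simp only [mul_add, add_mul, mul_one, mul_assoc, add_assoc, hΔ]
    _ = r * M * ↑r⁻¹ * s * r * M * ↑r⁻¹ * (D * ↑s⁻¹) * ↑J + copyPairDefect r s M := by
        rw [hJs]; simp only [mul_assoc]
    _ = copyPair r s M * D * ↑J + copyPairDefect r s M := by
        rw [hDs.units_inv_right.eq, copyPair]; simp only [mul_assoc]

theorem commute_copyPairDefect (hbr : r * s * r = s * r * s) (hMs : Commute M s)
    (hrs : (r - ↑r⁻¹ : B) = s - ↑s⁻¹) : Commute (s : B) (copyPairDefect r s M) := by
  have hΔ : (↑(r * s * r)⁻¹ * s : B) = r * ↑(r * s * r)⁻¹ :=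
    mod_cast halfTwist_inv_mul_of_braid hbr
  set z : B := r - ↑r⁻¹ with hz
  have hrz : Commute (r : B) z := (Commute.refl _).sub_right (Commute.refl _).units_inv_right
  have hMz : Commute M z := hrs ▸ hMs.sub_right hMs.units_inv_right
  have hquad : s * s * r * M - r * M = s * r * M * (r - ↑r⁻¹) :=
    calc (s * s * r * M - r * M : B) = s * (s - ↑s⁻¹) * r * M := by
          simp only [mul_sub, sub_mul, Units.mul_inv, one_mul]
      _ = s * (z * r) * M := by rw [← hrs]; simp only [mul_assoc]
      _ = s * r * (z * M) := by rw [← hrz.eq]; simp only [mul_assoc]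
      _ = s * r * M * (r - ↑r⁻¹) := by rw [← hMz.eq]; simp only [mul_assoc, hz]
  have hmove : s * (r * M * ↑r⁻¹ + s * r * M) = (r * M * ↑r⁻¹ + s * r * M) * r := by
    rw [mul_add, add_mul, Units.inv_mul_cancel_right, ← sub_eq_zero]
    rw [mul_sub, ← sub_eq_zero] at hquad
    simp only [mul_assoc] at hquad ⊢
    rw [← hquad]
    abel
  calc (s * copyPairDefect r s M : B)
      = (r * M * ↑r⁻¹ + s * r * M) * (r * ↑(r * s * r)⁻¹) := by
        rw [copyPairDefect, ← mul_assoc, hmove, mul_assoc]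
    _ = copyPairDefect r s M * s := by rw [← hΔ, copyPairDefect, mul_assoc _ _ (s : B)]

theorem mul_commutator_copyPair (hbr : r * s * r = s * r * s)
    (hrs : (r - ↑r⁻¹ : B) = s - ↑s⁻¹) (hMs : Commute M s) (hDs : Commute D s)
    (hperm : D * r * M = r * M * ↑r⁻¹ * D * ↑r⁻¹ + 1) :
    D * (s * copyPair r s M - copyPair r s M * s) =
      (s * copyPair r s M - copyPair r s M * s) * D * ↑(r⁻¹ * (s⁻¹ * s⁻¹) * r⁻¹) := by
  set J := r⁻¹ * (s⁻¹ * s⁻¹) * r⁻¹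
  have hsJ : Commute (s : B) J := (commute_jucysMurphy_inv_of_braid hbr).units_val
  calc D * (s * copyPair r s M - copyPair r s M * s)
      = s * (D * copyPair r s M) - D * copyPair r s M * s := by
        rw [mul_sub, ← mul_assoc, hDs.eq]; simp only [mul_assoc]
    _ = s * copyPair r s M * D * J - copyPair r s M * D * (J * s) := by
        rw [mul_copyPair hbr hMs hDs hperm, mul_add, add_mul,
          (commute_copyPairDefect hbr hMs hrs).eq, add_sub_add_right_eq_sub]
        simp only [mul_assoc, J]
    _ = s * copyPair r s M * D * J - copyPair r s M * (D * s) * J := by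
        rw [← hsJ.eq]; simp only [mul_assoc]
    _ = (s * copyPair r s M - copyPair r s M * s) * D * J := by
        rw [hDs.eq]; simp only [sub_mul, mul_assoc]

theorem sub_inv_eq_smul_one_of_hecke {K : Type*} [Field K] [Algebra K B] {q : K} (hq : q ≠ 0)
    (hr : (q • 1 - (r : B)) * (q⁻¹ • 1 + (r : B)) = 0) :
    (r - ↑r⁻¹ : B) = (q - q⁻¹) • 1 := by
  have hquad : ((q - q⁻¹) • 1 - (r - ↑r⁻¹) : B) * r = 0 := by
    rw [← hr]
    simp only [sub_mul, mul_add, smul_mul_assoc, mul_smul_comm, one_mul, mul_one, sub_smul,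
      smul_sub, Units.inv_mul, inv_smul_smul₀ hq]
    abel
  rw [Units.mul_left_eq_zero, sub_eq_zero] at hquad
  exact hquad.symm

end PermutationRelation

section OnFactors

variable {ι κ κ' n S A : Type*} [Fintype ι] [DecidableEq ι] [Fintype κ] [DecidableEq κ]
  [Fintype κ'] [DecidableEq κ'] [Fintype n] [DecidableEq n] [CommSemiring S] [Semiring A]
  [Algebra S A]

/-- Leg numbering: the operator on the tensor power indexed by `ι` that acts as `X` in the tensor
factors `p j`, `j : κ`, and trivially in the others. Splitting `ι → n` along the range of `p`, it
is the block-diagonal matrix all of whose blocks are `X`. -/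
def onFactors (S : Type*) [CommSemiring S] [Algebra S A] (p : κ ↪ ι) :
    Matrix (κ → n) (κ → n) A →ₐ[S] Matrix (ι → n) (ι → n) A :=
  let split : (ι → n) ≃ (κ → n) × ({i // i ∉ Set.range p} → n) :=
    (Equiv.piEquivPiSubtypeProd (· ∈ Set.range p) fun _ => n).trans
      (((Equiv.ofInjective p p.injective).symm.arrowCongr (Equiv.refl n)).prodCongr (Equiv.refl _))
  AlgHom.mk'
    ((reindexAlgEquiv S A split.symm : _ →+* _).comp
      ((blockDiagonalRingHom (κ → n) ({i // i ∉ Set.range p} → n) A).comp (Pi.constRingHom _ _)))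
    fun c X => by
      ext f g
      simp [blockDiagonal_apply]

theorem onFactors_apply (p : κ ↪ ι) (X : Matrix (κ → n) (κ → n) A) (f g : ι → n) :
    onFactors S p X f g = if ∀ i ∉ Set.range p, f i = g i then X (f ∘ p) (g ∘ p) else 0 := by
  refine (blockDiagonal_apply _ _ _).trans (if_congr ?_ rfl rfl)
  exact funext_iff.trans Subtype.forall

theorem map_onFactors {A' F : Type*} [Semiring A'] [Algebra S A'] [FunLike F A A']
    [ZeroHomClass F A A'] (p : κ ↪ ι) (φ : F) (X : Matrix (κ → n) (κ → n) A) :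
    (onFactors S p X).map φ = onFactors S p (X.map φ) := by
  ext f g
  simp only [map_apply, onFactors_apply, apply_ite φ, map_zero]

theorem onFactors_mul_onFactors_apply (p : κ ↪ ι) (p' : κ' ↪ ι)
    (hpp' : Disjoint (Set.range p) (Set.range p')) (X : Matrix (κ → n) (κ → n) A)
    (Y : Matrix (κ' → n) (κ' → n) A) (f g : ι → n) :
    (onFactors S p X * onFactors S p' Y) f g =
      if ∀ i, i ∉ Set.range p → i ∉ Set.range p' → f i = g i then
        X (f ∘ p) (g ∘ p) * Y (f ∘ p') (g ∘ p') else 0 := by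
  simp only [mul_apply, onFactors_apply]
  rw [Finset.sum_eq_single ((Set.range p).piecewise g f)]
  · have hleft : ∀ i ∉ Set.range p, f i = (Set.range p).piecewise g f i := fun i hi =>
      (Set.piecewise_eq_of_notMem _ _ _ hi).symm
    have hright : (∀ i ∉ Set.range p', (Set.range p).piecewise g f i = g i) ↔
        ∀ i, i ∉ Set.range p → i ∉ Set.range p' → f i = g i := by
      refine forall_congr' fun i => ?_
      by_cases hi : i ∈ Set.range p
      · simp only [Set.piecewise_eq_of_mem _ _ _ hi, hi, not_true, implies_true, false_implies]
      · simp only [Set.piecewise_eq_of_notMem _ _ _ hi, hi, not_false_eq_true, true_implies]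
    have hX : (Set.range p).piecewise g f ∘ p = g ∘ p := by
      ext j
      exact Set.piecewise_eq_of_mem _ _ _ ⟨j, rfl⟩
    have hY : (Set.range p).piecewise g f ∘ p' = f ∘ p' := by
      ext j
      exact Set.piecewise_eq_of_notMem _ _ _ (hpp'.notMem_of_mem_right ⟨j, rfl⟩)
    rw [if_pos hleft, if_congr hright rfl rfl, hX, hY, mul_ite, mul_zero]
  · intro h _ hne
    rw [ite_mul, zero_mul, mul_ite, mul_zero, ← ite_and, if_neg]
    rintro ⟨hf, hg⟩
    refine hne (funext fun i => ?_)
    by_cases hi : i ∈ Set.range p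
    · rw [Set.piecewise_eq_of_mem _ _ _ hi, hg i (hpp'.notMem_of_mem_left hi)]
    · rw [Set.piecewise_eq_of_notMem _ _ _ hi, hf i hi]
  · exact fun hmem => absurd (Finset.mem_univ _) hmem

theorem commute_onFactors (p : κ ↪ ι) (p' : κ' ↪ ι)
    (hpp' : Disjoint (Set.range p) (Set.range p')) {X : Matrix (κ → n) (κ → n) A}
    {Y : Matrix (κ' → n) (κ' → n) A} (hXY : ∀ a b c d, Commute (X a b) (Y c d)) :
    Commute (onFactors S p X) (onFactors S p' Y) := by
  ext f g
  rw [onFactors_mul_onFactors_apply p p' hpp', onFactors_mul_onFactors_apply p' p hpp'.symm]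
  simp only [(hXY _ _ _ _).eq, imp.swap]

end OnFactors

theorem forall_notMem_range_and_forall_comp {ι κ α : Type*} (p : κ → ι) {P : ι → Prop}
    (hP : ∀ i ∉ Set.range p, P i) (f g : ι → α) :
    ((∀ i ∉ Set.range p, f i = g i) ∧ ∀ j, P (p j) → f (p j) = g (p j)) ↔
      ∀ i, P i → f i = g i := by
  refine ⟨fun ⟨hrest, hrange⟩ i hi => ?_, fun h => ⟨fun i hi => h i (hP i hi), fun j => h (p j)⟩⟩
  by_cases hmem : i ∈ Set.range p
  · obtain ⟨j, rfl⟩ := hmem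
    exact hrange j hi
  · exact hrest i hmem

section TensorFactors

variable {N k m : ℕ} {A : Type*} [Ring A] [Algebra ℂ A]

theorem val_apply_eq_iff_of_val_apply_eq (p : Fin m ↪ Fin k) {i j : ℕ} (hj : j < m)
    (hp : (p ⟨j, hj⟩ : ℕ) = i) (l : Fin m) : (p l : ℕ) = i ↔ (l : ℕ) = j := by
  rw [← hp, Fin.val_inj, p.apply_eq_iff_eq, Fin.ext_iff]

theorem onFactors_emb1 (p : Fin m ↪ Fin k) (hm : 0 < m) (hp : (p ⟨0, hm⟩ : ℕ) = 0)
    (X : Matrix (Fin N) (Fin N) A) : onFactors ℂ p (emb1 m X) = emb1 k X := by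
  have hk : 0 < k := (Nat.zero_le _).trans_lt (p ⟨0, hm⟩).isLt
  have hp' : p ⟨0, hm⟩ = ⟨0, hk⟩ := Fin.ext hp
  have hval (j : Fin m) : (j : ℕ) ≠ 0 ↔ (p j : ℕ) ≠ 0 :=
    not_congr (val_apply_eq_iff_of_val_apply_eq p hm hp j).symm
  have hrange : ∀ i ∉ Set.range p, (i : ℕ) ≠ 0 := fun i hi h0 =>
    hi ⟨⟨0, hm⟩, hp'.trans (Fin.ext h0.symm)⟩
  ext f g
  simp only [onFactors_apply, emb1, hm, hk, dif_pos, Function.comp_apply, hp', ← ite_and, hval,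
    forall_notMem_range_and_forall_comp p hrange]

theorem onFactors_embR (p : Fin m ↪ Fin k) {i j : ℕ} (hj : j + 1 < m)
    (hi : (p ⟨j, Nat.lt_of_succ_lt hj⟩ : ℕ) = i) (hi' : (p ⟨j + 1, hj⟩ : ℕ) = i + 1)
    (R : RMat N) : onFactors ℂ p (embR m R j) = embR k R i := by
  have hk : i + 1 < k := hi' ▸ (p ⟨j + 1, hj⟩).isLt
  have hp : p ⟨j, Nat.lt_of_succ_lt hj⟩ = ⟨i, Nat.lt_of_succ_lt hk⟩ := Fin.ext hi
  have hp' : p ⟨j + 1, hj⟩ = ⟨i + 1, hk⟩ := Fin.ext hi'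
  have hval (l : Fin m) : ((l : ℕ) ≠ j ∧ (l : ℕ) ≠ j + 1) ↔
      ((p l : ℕ) ≠ i ∧ (p l : ℕ) ≠ i + 1) :=
    and_congr (not_congr (val_apply_eq_iff_of_val_apply_eq p _ hi l).symm)
      (not_congr (val_apply_eq_iff_of_val_apply_eq p _ hi' l).symm)
  have hrange : ∀ l ∉ Set.range p, (l : ℕ) ≠ i ∧ (l : ℕ) ≠ i + 1 := fun l hl =>
    ⟨fun h => hl ⟨_, hp.trans (Fin.ext h.symm)⟩, fun h => hl ⟨_, hp'.trans (Fin.ext h.symm)⟩⟩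
  ext f g
  simp only [onFactors_apply, embR, hj, hk, dif_pos, Function.comp_apply, hp, hp', ← ite_and,
    ← and_imp, hval, forall_notMem_range_and_forall_comp p hrange]

theorem onFactors_liftC_embR (p : Fin m ↪ Fin k) {i j : ℕ} (hj : j + 1 < m)
    (hi : (p ⟨j, Nat.lt_of_succ_lt hj⟩ : ℕ) = i) (hi' : (p ⟨j + 1, hj⟩ : ℕ) = i + 1)
    (R : RMat N) : onFactors ℂ p (liftC A (embR m R j)) = liftC A (embR k R i) := by
  rw [liftC, liftC, ← map_onFactors, onFactors_embR p hj hi hi']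

theorem liftC_mul (X Y : TMat N k ℂ) : liftC A (X * Y) = liftC A X * liftC A Y :=
  map_mul (Algebra.ofId ℂ A).mapMatrix X Y

/-- The embedding `R ↦ R_{i+1}` of operators on two tensor factors into operators over `A` on `k`
tensor factors, as an algebra homomorphism. -/
def embRHom (A : Type*) [Ring A] [Algebra ℂ A] {i : ℕ} (hi : i + 1 < k) :
    RMat N →ₐ[ℂ] TMat N k A :=
  (onFactors ℂ ((Fin.natAddEmb i).trans (Fin.castLEEmb hi))).comp
    ((Algebra.ofId ℂ A).mapMatrix.comp
      (reindexAlgEquiv ℂ ℂ (finTwoArrowEquiv (Fin N)).symm).toAlgHom)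

theorem embRHom_apply {i : ℕ} (hi : i + 1 < k) (R : RMat N) :
    embRHom A hi R = liftC A (embR k R i) := by
  have hR : reindexAlgEquiv ℂ ℂ (finTwoArrowEquiv (Fin N)).symm R = embR 2 R 0 := by
    ext f g
    simp [embR, finTwoArrowEquiv]
  rw [← onFactors_liftC_embR (i := i) ((Fin.natAddEmb i).trans (Fin.castLEEmb hi)) one_lt_two rfl
    rfl, ← hR]
  rfl

theorem commute_emb1_liftC_embR {i : ℕ} (hi0 : i ≠ 0) (hi : i + 1 < k)
    (X : Matrix (Fin N) (Fin N) A) (R : RMat N) :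
    Commute (emb1 k X) (liftC A (embR k R i)) := by
  have hk : 1 ≤ k := by omega
  have hX : emb1 k X = onFactors ℂ (Fin.castLEEmb hk) (emb1 1 X) :=
    (onFactors_emb1 _ one_pos rfl X).symm
  have hR : liftC A (embR k R i) =
      onFactors ℂ ((Fin.natAddEmb i).trans (Fin.castLEEmb hi)) (liftC A (embR 2 R 0)) :=
    (onFactors_liftC_embR (i := i) _ one_lt_two rfl rfl R).symm
  rw [hX, hR]
  refine commute_onFactors _ _ (Set.disjoint_left.mpr ?_) fun _ _ _ _ =>
    (Algebra.commutes _ _).symm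
  rintro _ ⟨a, rfl⟩ ⟨b, hb⟩
  have : i + (b : ℕ) = a := congrArg Fin.val hb
  omega

theorem PermRel.emb1_three {R Rinv : RMat N} {M D : Matrix (Fin N) (Fin N) A}
    (hperm : PermRel R Rinv M D) :
    emb1 3 D * liftC A (embR 3 R 0) * emb1 3 M =
      liftC A (embR 3 R 0) * emb1 3 M * liftC A (embR 3 Rinv 0) * emb1 3 D *
        liftC A (embR 3 Rinv 0) + 1 := by
  let p : Fin 2 ↪ Fin 3 := Fin.castLEEmb (Nat.le_succ 2)
  have hX (X : Matrix (Fin N) (Fin N) A) : onFactors ℂ p (emb1 2 X) = emb1 3 X :=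
    onFactors_emb1 p two_pos rfl X
  have hR (R : RMat N) : onFactors ℂ p (liftC A (embR 2 R 0)) = liftC A (embR 3 R 0) :=
    onFactors_liftC_embR p one_lt_two rfl rfl R
  simpa only [map_mul, map_add, map_one, hX, hR] using congrArg (onFactors ℂ p) hperm

end TensorFactors

theorem statement1_general {N : ℕ} (R Rinv : RMat N) (c : ℂ) (hinv : R * Rinv = 1)
    (hbr : IsBraiding R) (hc : R - Rinv = c • 1) {A : Type*} [Ring A] [Algebra ℂ A]
    (M D : Matrix (Fin N) (Fin N) A) (hperm : PermRel R Rinv M D) :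
    emb1 3 D *
        (liftC A (embR 3 R 1) * copyX 3 R Rinv M 1 * copyX 3 R Rinv M 2
          - copyX 3 R Rinv M 1 * copyX 3 R Rinv M 2 * liftC A (embR 3 R 1))
      = (liftC A (embR 3 R 1) * copyX 3 R Rinv M 1 * copyX 3 R Rinv M 2
          - copyX 3 R Rinv M 1 * copyX 3 R Rinv M 2 * liftC A (embR 3 R 1)) *
          emb1 3 D *
          liftC A (embR 3 Rinv 0 * (embR 3 Rinv 1 * embR 3 Rinv 1) * embR 3 Rinv 0) := by
  let ρ : (RMat N)ˣ := ⟨R, Rinv, hinv, mul_eq_one_comm.mp hinv⟩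
  have h₁ : 0 + 1 < 3 := by decide
  have h₂ : 1 + 1 < 3 := by decide
  let r : (TMat N 3 A)ˣ := Units.map (embRHom (N := N) A h₁).toMonoidHom ρ
  let s : (TMat N 3 A)ˣ := Units.map (embRHom (N := N) A h₂).toMonoidHom ρ
  have hr : (r : TMat N 3 A) = liftC A (embR 3 R 0) := embRHom_apply _ _
  have hr' : (↑r⁻¹ : TMat N 3 A) = liftC A (embR 3 Rinv 0) := embRHom_apply _ _
  have hs : (s : TMat N 3 A) = liftC A (embR 3 R 1) := embRHom_apply _ _
  have hs' : (↑s⁻¹ : TMat N 3 A) = liftC A (embR 3 Rinv 1) := embRHom_apply _ _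
  have hbraid : r * s * r = s * r * s := by
    ext1
    simpa only [Units.val_mul, hr, hs, liftC_mul] using congrArg (liftC A) hbr
  have hrs : (r - ↑r⁻¹ : TMat N 3 A) = s - ↑s⁻¹ := by
    simp only [hr, hr', hs, hs', ← embRHom_apply h₁,
      ← embRHom_apply h₂, ← map_sub, hc, map_smul, map_one]
  have hcomm (X : Matrix (Fin N) (Fin N) A) : Commute (emb1 3 X) (s : TMat N 3 A) :=
    hs ▸ commute_emb1_liftC_embR one_ne_zero h₂ X R
  have hmain := mul_commutator_copyPair hbraid hrs (hcomm M) (hcomm D)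
    (by rw [hr, hr']; exact hperm.emb1_three)
  simpa only [copyPair, Units.val_mul, hr, hr', hs, hs', copyX, liftC_mul, mul_assoc] using hmain

/-- the permutation relations preserve the defining ideal of the
RE algebra:
`D₁ (R₂ M_{2̄} M_{3̄} − M_{2̄} M_{3̄} R₂)
  = (R₂ M_{2̄} M_{3̄} − M_{2̄} M_{3̄} R₂) D₁ R₁⁻¹ R₂⁻² R₁⁻¹`
as `N³ × N³` matrices over `𝒜`. -/
theorem statement1 {N : ℕ} (R Rinv : RMat N) (q : ℂ)
    (hq0 : q ≠ 0) (hq1 : q ≠ 1) (hqm1 : q ≠ -1)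
    (hinv : R * Rinv = 1) (hinv' : Rinv * R = 1)
    (hbr : IsBraiding R) (hH : HeckeCond R q)
    {A : Type _} [Ring A] [Algebra ℂ A]
    (M D : Matrix (Fin N) (Fin N) A) (hperm : PermRel R Rinv M D) :
    emb1 3 D *
        (liftC A (embR 3 R 1) * copyX 3 R Rinv M 1 * copyX 3 R Rinv M 2
          - copyX 3 R Rinv M 1 * copyX 3 R Rinv M 2 * liftC A (embR 3 R 1))
      = (liftC A (embR 3 R 1) * copyX 3 R Rinv M 1 * copyX 3 R Rinv M 2
          - copyX 3 R Rinv M 1 * copyX 3 R Rinv M 2 * liftC A (embR 3 R 1)) *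
          emb1 3 D *
          liftC A (embR 3 Rinv 0 * (embR 3 Rinv 1 * embR 3 Rinv 1) * embR 3 Rinv 0) := by
  exact
    statement1_general R Rinv (q - q⁻¹) hinv hbr
      (sub_inv_eq_smul_one_of_hecke (r := ⟨R, Rinv, hinv, hinv'⟩) hq0 hH) M D hperm
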